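/- There is no quantum cap of size 11 in PG(4,4); that is, there is no cap of n = 11 points in PG(4,4) meeting every hyperplane in a number of points with the same parity as n. -/

import Mathlib

namespace QCap

/-- four values in `ZMod 3` split into two pairs of equal values, the pairs being different -/
def good (a b c d : ZMod 3) : Bool :=
  (a == b && c == d && a != c) || (a == c && b == d && a != b) || (a == d && b == c && a != b)

theorem good_of : ∀ a b c d : ZMod 3,
    (∀ t : ZMod 3, ((if a = t then 1 else 0) + (if b = t then 1 else 0) +
      (if c = t then 1 else 0) + (if d = t then 1 else 0) : ℕ) = 0 ∨
      ((if a = t then 1 else 0) + (if b = t then 1 else 0) +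
      (if c = t then 1 else 0) + (if d = t then 1 else 0) : ℕ) = 2) → good a b c d = true := by
  decide

theorem good_shift : ∀ a b c d t : ZMod 3, good (a - t) (b - t) (c - t) (d - t) = good a b c d := by
  decide

set_option synthInstance.maxSize 100000 in
set_option synthInstance.maxHeartbeats 0 in
set_option maxRecDepth 100000 in
/-- The finite core: normalized rows. -/
theorem core :
    ∀ a0 a2 a3 a4 : ZMod 3, good a2 a3 a4 0 = true →
    ∀ b0 b1 b3 b4 : ZMod 3, good b1 b3 b4 0 = true → good (a0 - b0) (a3 - b3) (a4 - b4) 0 = true →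
    ∀ c0 c1 c2 c4 : ZMod 3, good c1 c2 c4 0 = true → good (a0 - c0) (a2 - c2) (a4 - c4) 0 = true →
      good (b0 - c0) (b1 - c1) (b4 - c4) 0 = true →
    ∀ d0 d1 d2 d3 : ZMod 3, good d1 d2 d3 0 = true → good (a0 - d0) (a2 - d2) (a3 - d3) 0 = true →
      good (b0 - d0) (b1 - d1) (b3 - d3) 0 = true →
      good (c0 - d0) (c1 - d1) (c2 - d2) 0 = true → False := by
  decide +kernel

theorem core_matrix (E : Fin 5 → Fin 6 → ZMod 3)
    (h : ∀ i j : Fin 5, i ≠ j → ∀ t : ZMod 3,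
      (∑ k : Fin 6, if k ≠ i.castSucc ∧ k ≠ j.castSucc ∧ E i k - E j k = t then 1 else 0 : ℕ) = 0 ∨
      (∑ k : Fin 6, if k ≠ i.castSucc ∧ k ≠ j.castSucc ∧ E i k - E j k = t then 1 else 0 : ℕ) = 2) :
    False := by
  have G : ∀ i j k₁ k₂ k₃ : Fin 5, i ≠ j → k₁ ≠ k₂ → k₁ ≠ k₃ → k₂ ≠ k₃ → k₁ ≠ i → k₂ ≠ i → k₃ ≠ i →
      k₁ ≠ j → k₂ ≠ j → k₃ ≠ j →
      good (E i k₁.castSucc - E j k₁.castSucc) (E i k₂.castSucc - E j k₂.castSucc)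
        (E i k₃.castSucc - E j k₃.castSucc) (E i 5 - E j 5) = true := by
    intro i j k₁ k₂ k₃ hij h12 h13 h23 h1i h2i h3i h1j h2j h3j
    apply good_of
    intro t
    have hu : (Finset.univ : Finset (Fin 6)) =
        {i.castSucc, j.castSucc, k₁.castSucc, k₂.castSucc, k₃.castSucc, 5} := by
      clear h
      revert i j k₁ k₂ k₃
      decide +kernel
    have l5 : ∀ x : Fin 5, x.castSucc ≠ 5 := by decide
    have l5' : ∀ x : Fin 5, 5 ≠ x.castSucc := by decide
    have hh := h i j hij t
    rw [hu] at hh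
    rw [Finset.sum_insert (by simp [*, Ne.symm, h1i.symm, h2i.symm, h3i.symm]),
      Finset.sum_insert (by simp [*, h1j.symm, h2j.symm, h3j.symm]),
      Finset.sum_insert (by simp [*]), Finset.sum_insert (by simp [*]),
      Finset.sum_insert (by simp [*]), Finset.sum_singleton] at hh
    simpa only [ne_eq, not_true_eq_false, false_and, and_false, if_false, zero_add,
      Fin.castSucc_inj, l5', h1i, h2i, h3i, h1j, h2j, h3j, not_false_eq_true, true_and,
      add_assoc] using hh
  -- normalize
  let D : Fin 5 → Fin 6 → ZMod 3 := fun i k => E i k - E i 5 - (E 0 k - E 0 5)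
  have N : ∀ a b c d a' b' c' d' t : ZMod 3, good a b c d = true →
      a' = a - t → b' = b - t → c' = c - t → d' = d - t → good a' b' c' d' = true := by
    rintro a b c d _ _ _ _ t h rfl rfl rfl rfl
    rwa [good_shift]
  refine core (D 1 0) (D 1 2) (D 1 3) (D 1 4) ?_ (D 2 0) (D 2 1) (D 2 3) (D 2 4) ?_ ?_
    (D 3 0) (D 3 1) (D 3 2) (D 3 4) ?_ ?_ ?_ (D 4 0) (D 4 1) (D 4 2) (D 4 3) ?_ ?_ ?_ ?_
  · refine N _ _ _ _ _ _ _ _ (E 1 5 - E 0 5) (G 1 0 2 3 4 ?_ ?_ ?_ ?_ ?_ ?_ ?_ ?_ ?_ ?_) ?_ ?_ ?_ ?_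
    any_goals decide
    all_goals simp [D]
    all_goals ring
  · refine N _ _ _ _ _ _ _ _ (E 2 5 - E 0 5) (G 2 0 1 3 4 ?_ ?_ ?_ ?_ ?_ ?_ ?_ ?_ ?_ ?_) ?_ ?_ ?_ ?_
    any_goals decide
    all_goals simp [D]
    all_goals ring
  · refine N _ _ _ _ _ _ _ _ (E 1 5 - E 2 5) (G 1 2 0 3 4 ?_ ?_ ?_ ?_ ?_ ?_ ?_ ?_ ?_ ?_) ?_ ?_ ?_ ?_
    any_goals decide
    all_goals simp [D]
    all_goals ring
  · refine N _ _ _ _ _ _ _ _ (E 3 5 - E 0 5) (G 3 0 1 2 4 ?_ ?_ ?_ ?_ ?_ ?_ ?_ ?_ ?_ ?_) ?_ ?_ ?_ ?_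
    any_goals decide
    all_goals simp [D]
    all_goals ring
  · refine N _ _ _ _ _ _ _ _ (E 1 5 - E 3 5) (G 1 3 0 2 4 ?_ ?_ ?_ ?_ ?_ ?_ ?_ ?_ ?_ ?_) ?_ ?_ ?_ ?_
    any_goals decide
    all_goals simp [D]
    all_goals ring
  · refine N _ _ _ _ _ _ _ _ (E 2 5 - E 3 5) (G 2 3 0 1 4 ?_ ?_ ?_ ?_ ?_ ?_ ?_ ?_ ?_ ?_) ?_ ?_ ?_ ?_
    any_goals decide
    all_goals simp [D]
    all_goals ring
  · refine N _ _ _ _ _ _ _ _ (E 4 5 - E 0 5) (G 4 0 1 2 3 ?_ ?_ ?_ ?_ ?_ ?_ ?_ ?_ ?_ ?_) ?_ ?_ ?_ ?_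
    any_goals decide
    all_goals simp [D]
    all_goals ring
  · refine N _ _ _ _ _ _ _ _ (E 1 5 - E 4 5) (G 1 4 0 2 3 ?_ ?_ ?_ ?_ ?_ ?_ ?_ ?_ ?_ ?_) ?_ ?_ ?_ ?_
    any_goals decide
    all_goals simp [D]
    all_goals ring
  · refine N _ _ _ _ _ _ _ _ (E 2 5 - E 4 5) (G 2 4 0 1 3 ?_ ?_ ?_ ?_ ?_ ?_ ?_ ?_ ?_ ?_) ?_ ?_ ?_ ?_
    any_goals decide
    all_goals simp [D]
    all_goals ring
  · refine N _ _ _ _ _ _ _ _ (E 3 5 - E 4 5) (G 3 4 0 1 2 ?_ ?_ ?_ ?_ ?_ ?_ ?_ ?_ ?_ ?_) ?_ ?_ ?_ ?_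
    any_goals decide
    all_goals simp [D]
    all_goals ring

open Finset
open scoped Classical

theorem exists_log (F : Type*) [Field F] [Fintype F] (hF : Fintype.card F = 4) :
    ∃ g : F → ZMod 3, (∀ x y, x ≠ 0 → y ≠ 0 → g (x * y) = g x + g y) ∧
      (∀ x y, x ≠ 0 → y ≠ 0 → g x = g y → x = y) ∧ (∀ t, ∃ x, x ≠ 0 ∧ g x = t) := by
  have hc : Nat.card Fˣ = 3 := by
    rw [Nat.card_units, Nat.card_eq_fintype_card, hF]
  haveI : Fact (Nat.Prime 3) := ⟨by norm_num⟩
  let e : Fˣ ≃* Multiplicative (ZMod 3) := mulEquivOfPrimeCardEq (p := 3) hc (by simp)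
  refine ⟨fun x => if hx : x = 0 then 0 else (e (Units.mk0 x hx)).toAdd, ?_, ?_, ?_⟩
  · intro x y hx hy
    simp [hx, hy, Units.mk0_mul]
  · intro x y hx hy h
    simpa [hx, hy] using h
  · intro t
    refine ⟨(e.symm (Multiplicative.ofAdd t) : Fˣ), Units.ne_zero _, ?_⟩
    simp

theorem no_matrix (F : Type*) [Field F] [Fintype F] (hF : Fintype.card F = 4)
    (A : Fin 5 → Fin 6 → F)
    (h1 : ∀ i, (∑ k, if A i k = 0 then 1 else 0 : ℕ) = 1)
    (h2 : ∀ i j, i ≠ j → ∀ l : F, l ≠ 0 →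
      (∑ k, if A i k = l * A j k then 1 else 0 : ℕ) = 0 ∨
      (∑ k, if A i k = l * A j k then 1 else 0 : ℕ) = 2) : False := by
  obtain ⟨g, gm, gi, gs⟩ := exists_log F hF
  have h1' : ∀ i, ∃ k, ∀ k', A i k' = 0 ↔ k' = k := by
    intro i
    have := h1 i
    rw [← Finset.card_filter, Finset.card_eq_one] at this
    obtain ⟨k, hk⟩ := this
    refine ⟨k, fun k' => ?_⟩
    have := Finset.ext_iff.1 hk k'
    simpa using this
  choose s hs using h1'
  have hsinj : Function.Injective s := by
    intro i j hij
    by_contra hne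
    -- each ratio occurs at the common zero
    have key : ∀ t : ZMod 3, (∑ k, if k ≠ s i ∧ g (A i k) - g (A j k) = t then 1 else 0 : ℕ) = 1 := by
      intro t
      obtain ⟨l, hl, rfl⟩ := gs t
      have e1 : ∀ k, (if A i k = l * A j k then 1 else 0 : ℕ) = (if k = s i then 1 else 0) +
          (if k ≠ s i ∧ g (A i k) - g (A j k) = g l then 1 else 0) := by
        intro k
        by_cases hk : k = s i
        · have a1 := (hs i k).2 hk
          have a2 := (hs j k).2 (hk.trans hij)
          simp [hk] at a1 a2 ⊢
          simp [a1, a2]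
        · have a1 : A i k ≠ 0 := fun h => hk ((hs i k).1 h)
          have a2 : A j k ≠ 0 := fun h => hk (((hs j k).1 h).trans hij.symm)
          have : A i k = l * A j k ↔ g (A i k) - g (A j k) = g l := by
            rw [sub_eq_iff_eq_add, ← gm _ _ hl a2]
            exact ⟨fun h => by rw [h], fun h => gi _ _ a1 (mul_ne_zero hl a2) h⟩
          simp [hk, this]
      have := h2 i j hne l hl
      simp only [e1, Finset.sum_add_distrib] at this
      simp only [Finset.sum_ite_eq', Finset.mem_univ, if_true] at this
      omega
    have tot : ∑ t : ZMod 3, (∑ k, if k ≠ s i ∧ g (A i k) - g (A j k) = t then 1 else 0 : ℕ) = 5 := by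
      rw [Finset.sum_comm]
      have : ∀ k, (∑ t : ZMod 3, if k ≠ s i ∧ g (A i k) - g (A j k) = t then 1 else 0 : ℕ)
          = if k ≠ s i then 1 else 0 := by
        intro k
        by_cases hk : k = s i <;> simp [hk]
      simp only [this]
      rw [← Finset.card_filter, Finset.filter_ne', Finset.card_erase_of_mem (Finset.mem_univ _)]
      simp
    simp only [key] at tot
    simp [ZMod.card] at tot
  obtain ⟨t, ht⟩ : ∃ t, ∀ i, s i ≠ t := by
    by_contra hcon
    push Not at hcon
    have := Fintype.card_le_of_surjective s hcon
    simp at this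
  let e0 : Fin 6 → Fin 6 := Fin.snoc (α := fun _ => Fin 6) s t
  have he0 : Function.Bijective e0 := by
    apply Finite.injective_iff_bijective.1
    rw [Fin.snoc_injective_iff]
    exact ⟨hsinj, by rintro ⟨i, hi⟩; exact ht i hi⟩
  let e := Equiv.ofBijective e0 he0
  have hee : ∀ i : Fin 5, e i.castSucc = s i := by
    intro i; simp [e, e0]
  have hz : ∀ i k, A i (e k) = 0 ↔ k = i.castSucc := by
    intro i k
    rw [hs, ← hee, e.injective.eq_iff]
  apply core_matrix (fun i k => g (A i (e k)))
  intro i j hij t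
  obtain ⟨l, hl, rfl⟩ := gs t
  have := h2 i j hij l hl
  rw [← Equiv.sum_comp e] at this
  have e2 : ∀ k : Fin 6, (if k ≠ i.castSucc ∧ k ≠ j.castSucc ∧ g (A i (e k)) - g (A j (e k)) = g l
      then 1 else 0 : ℕ) = if A i (e k) = l * A j (e k) then 1 else 0 := by
    intro k
    by_cases hi : k = i.castSucc
    · have a1 := (hz i k).2 hi
      have a2 : A j (e k) ≠ 0 := fun h => by
        have := (hz j k).1 h
        exact hij (Fin.castSucc_injective _ (hi.symm.trans this))
      simp [hi] at a1 a2 ⊢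
      simp [a1, a2, hl]
    · have a1 : A i (e k) ≠ 0 := fun h => hi ((hz i k).1 h)
      by_cases hj : k = j.castSucc
      · have a2 := (hz j k).2 hj
        simp [hj] at a1 a2 ⊢
        simp [a1, a2]
      · have a2 : A j (e k) ≠ 0 := fun h => hj ((hz j k).1 h)
        have : A i (e k) = l * A j (e k) ↔ g (A i (e k)) - g (A j (e k)) = g l := by
          rw [sub_eq_iff_eq_add, ← gm _ _ hl a2]
          exact ⟨fun h => by rw [h], fun h => gi _ _ a1 (mul_ne_zero hl a2) h⟩
        simp [hi, hj, this]
  simpa only [e2] using this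

variable {F : Type*} [Field F] [Fintype F]

noncomputable instance : Fintype (Module.Dual F (Fin 5 → F)) :=
  haveI : Finite (Module.Dual F (Fin 5 → F)) := Finite.of_injective (fun f => (f : (Fin 5 → F) → F)) DFunLike.coe_injective
  Fintype.ofFinite _

theorem count_ann (hF : Fintype.card F = 4) {n : ℕ} (w : Fin n → (Fin 5 → F))
    (hw : LinearIndependent F w) (hn : n ≤ 5) :
    (∑ f : Module.Dual F (Fin 5 → F), if ∀ i, f (w i) = 0 then 1 else 0 : ℕ) = 4 ^ (5 - n) := by
  rw [← Finset.card_filter]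
  have h1 := Subspace.finrank_add_finrank_dualAnnihilator_eq (Submodule.span F (Set.range w))
  rw [finrank_span_eq_card hw] at h1
  simp at h1
  have h2 := Module.natCard_eq_pow_finrank (K := F) (V := (Submodule.span F (Set.range w)).dualAnnihilator)
  rw [Nat.card_eq_fintype_card (α := F), hF] at h2
  have h3 : Module.finrank F (Submodule.span F (Set.range w)).dualAnnihilator = 5 - n := by omega
  rw [← h3, ← h2]
  rw [← Set.ncard_coe_finset, ← Nat.card_coe_set_eq]
  congr 1
  congr 1
  ext f
  simp only [Finset.coe_filter, Finset.mem_univ, true_and, Set.mem_ofPred_eq, SetLike.mem_coe,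
    Submodule.mem_dualAnnihilator]
  constructor
  · intro h x hx
    have : Submodule.span F (Set.range w) ≤ LinearMap.ker f := by
      rw [Submodule.span_le]; rintro _ ⟨i, rfl⟩; exact h i
    exact this hx
  · intro h i
    exact h _ (Submodule.subset_span ⟨i, rfl⟩)

noncomputable def z (v : Fin 11 → (Fin 5 → F)) (f : Module.Dual F (Fin 5 → F)) : ℕ :=
  ∑ i, if f (v i) = 0 then 1 else 0

set_option maxHeartbeats 1000000 in
theorem z_le (v : Fin 11 → (Fin 5 → F)) (hF : Fintype.card F = 4)
    (hcap : ∀ i j k, i ≠ j → i ≠ k → j ≠ k → LinearIndependent F ![v i, v j, v k])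
    (hodd : ∀ f : Module.Dual F (Fin 5 → F), f ≠ 0 → z v f % 2 = 1)
    (f : Module.Dual F (Fin 5 → F)) (hf : f ≠ 0) : z v f ≤ 5 := by
  have hli1 : ∀ i, LinearIndependent F ![v i] := by
    intro i
    obtain ⟨j, k, h1, h2, h3⟩ : ∃ j k, i ≠ j ∧ i ≠ k ∧ j ≠ k := by revert i; decide
    have := (hcap i j k h1 h2 h3).comp ![0] (by intro a b _; exact Subsingleton.elim a b)
    convert this using 1
    ext a; fin_cases a; rfl
  have hli2 : ∀ i j, i ≠ j → LinearIndependent F ![v i, v j] := by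
    intro i j h1
    obtain ⟨k, h2, h3⟩ : ∃ k, i ≠ k ∧ j ≠ k := by revert i j; decide
    have := (hcap i j k h1 h2 h3).comp ![0, 1] (by decide)
    convert this using 1
    ext a; fin_cases a <;> rfl
  have c1 : ∀ i, (∑ f : Module.Dual F (Fin 5 → F), if f (v i) = 0 then 1 else 0 : ℕ) = 256 := by
    intro i
    have := count_ann hF _ (hli1 i) (by norm_num)
    simpa using this
  have c2 : ∀ i j, (∑ f : Module.Dual F (Fin 5 → F),
      (if f (v i) = 0 then 1 else 0) * (if f (v j) = 0 then 1 else 0) : ℕ) =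
      if i = j then 256 else 64 := by
    intro i j
    split_ifs with h
    · subst h
      rw [← c1 i]
      refine Finset.sum_congr rfl fun f _ => ?_
      split_ifs <;> rfl
    · have := count_ann hF _ (hli2 i j h) (by norm_num)
      rw [show (64 : ℕ) = 4 ^ (5 - 2) by norm_num, ← this]
      refine Finset.sum_congr rfl fun f _ => ?_
      simp [Fin.forall_fin_two]
      split_ifs <;> simp_all
  have c3 : ∀ i j k, (∑ f : Module.Dual F (Fin 5 → F),
      (if f (v i) = 0 then 1 else 0) * (if f (v j) = 0 then 1 else 0) *
        (if f (v k) = 0 then 1 else 0) : ℕ) =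
      if i = j then (if i = k then 256 else 64) else if i = k then 64 else
        if j = k then 64 else 16 := by
    intro i j k
    by_cases h : i = j
    · subst h
      rw [if_pos rfl, ← c2]
      refine Finset.sum_congr rfl fun f _ => ?_
      split_ifs <;> rfl
    rw [if_neg h]
    by_cases h' : i = k
    · subst h'
      rw [if_pos rfl]
      have := c2 i j
      rw [if_neg h] at this
      rw [← this]
      refine Finset.sum_congr rfl fun f _ => ?_
      split_ifs <;> rfl
    rw [if_neg h']
    by_cases h'' : j = k
    · subst h''
      rw [if_pos rfl]
      have := c2 i j
      rw [if_neg h] at this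
      rw [← this]
      refine Finset.sum_congr rfl fun f _ => ?_
      split_ifs <;> rfl
    rw [if_neg h'']
    have := count_ann hF _ (hcap i j k h h' h'') (by norm_num)
    rw [show (16 : ℕ) = 4 ^ (5 - 3) by norm_num, ← this]
    refine Finset.sum_congr rfl fun f _ => ?_
    simp [Fin.forall_fin_succ]
    split_ifs <;> simp_all
  have s0 : (∑ f : Module.Dual F (Fin 5 → F), 1 : ℕ) = 1024 := by
    have := count_ann hF (Fin.elim0 : Fin 0 → (Fin 5 → F)) linearIndependent_empty_type (by norm_num)
    simpa using this
  have s1 : (∑ f, z v f) = 2816 := by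
    unfold z
    rw [Finset.sum_comm]
    simp [c1]
  have s2 : (∑ f, z v f * z v f) = 9856 := by
    unfold z
    simp only [Finset.sum_mul_sum]
    rw [Finset.sum_comm]
    simp_rw [Finset.sum_comm (s := (Finset.univ : Finset (Module.Dual F (Fin 5 → F)))), c2]
    decide +kernel
  have s3 : (∑ f, z v f * z v f * z v f) = 39776 := by
    unfold z
    simp only [Finset.sum_mul_sum, Finset.sum_mul, Finset.mul_sum]
    rw [Finset.sum_comm]
    simp_rw [Finset.sum_comm (s := (Finset.univ : Finset (Module.Dual F (Fin 5 → F)))), c3]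
    decide +kernel
  let Q : ℕ → ℤ := fun n => ((n : ℤ) - 1) * (n - 3) * (n - 5)
  have sQ : ∑ f, Q (z v f) = 480 := by
    have : ∀ f, Q (z v f) = ((z v f * z v f * z v f : ℕ) : ℤ) - 9 * ((z v f * z v f : ℕ) : ℤ)
        + 23 * ((z v f : ℕ) : ℤ) - 15 * ((1 : ℕ) : ℤ) := by
      intro f; simp only [Q]; push_cast; ring
    simp only [this, Finset.sum_sub_distrib, Finset.sum_add_distrib, ← Finset.mul_sum,
      ← Nat.cast_sum, s0, s1, s2, s3]
    norm_num
  have hz0 : z v 0 = 11 := by simp [z]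
  have hzle : ∀ f, z v f ≤ 11 := by
    intro f
    unfold z
    rw [← Finset.card_filter]
    exact (Finset.card_le_univ _).trans (by simp)
  have hQn : ∀ n : ℕ, n % 2 = 1 → n ≤ 11 → 0 ≤ Q n ∧ (5 < n → 0 < Q n) := by
    clear * -
    intro n h1 h2
    interval_cases n <;> simp [Q] at h1 ⊢
  have hQ : ∀ f, f ≠ 0 → 0 ≤ Q (z v f) ∧ (5 < z v f → 0 < Q (z v f)) := by
    intro f hf
    have h1 := hodd f hf
    have h2 := hzle f
    exact hQn _ h1 h2
  rw [← Finset.add_sum_erase _ _ (Finset.mem_univ (0 : Module.Dual F (Fin 5 → F))), hz0] at sQ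
  have hs : ∑ x ∈ Finset.univ.erase 0, Q (z v x) = 0 := by
    have : Q 11 = 480 := by simp [Q]
    linarith
  rw [Finset.sum_eq_zero_iff_of_nonneg (fun f hf => (hQ f (Finset.ne_of_mem_erase hf)).1)] at hs
  have := hs f (Finset.mem_erase.2 ⟨hf, Finset.mem_univ _⟩)
  by_contra hcon
  have h3 := (hQ f hf).2 (by omega)
  omega

theorem no_config (v : Fin 11 → (Fin 5 → F)) (hF : Fintype.card F = 4)
    (hcap : ∀ i j k, i ≠ j → i ≠ k → j ≠ k → LinearIndependent F ![v i, v j, v k])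
    (hodd : ∀ f : Module.Dual F (Fin 5 → F), f ≠ 0 → z v f % 2 = 1) : False := by
  have hle := z_le v hF hcap hodd
  have hspan : Submodule.span F (Set.range v) = ⊤ := by
    by_contra hne
    obtain ⟨f, hf, hf'⟩ := Submodule.exists_le_ker_of_lt_top _ (lt_top_iff_ne_top.2 hne)
    have h1 := hle f hf
    have : z v f = 11 := by
      have : ∀ i, f (v i) = 0 := fun i => hf' (Submodule.subset_span ⟨i, rfl⟩)
      simp [z, this]
    omega
  obtain ⟨κ, a, ha, hsp, hli⟩ := exists_linearIndependent' F v
  rw [hspan] at hsp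
  haveI : Finite κ := Finite.of_injective a ha
  haveI := Fintype.ofFinite κ
  let b0 : Module.Basis κ F (Fin 5 → F) := Module.Basis.mk hli (by rw [hsp])
  have hcard : Fintype.card κ = 5 := by
    have := Module.finrank_eq_card_basis b0
    simpa using this.symm
  let ek : κ ≃ Fin 5 := Fintype.equivFinOfCardEq hcard
  let b := b0.reindex ek
  let s : Fin 5 → Fin 11 := fun i => a (ek.symm i)
  have hs : Function.Injective s := ha.comp ek.symm.injective
  have hb : ∀ i, v (s i) = b i := by
    intro i; simp [b, b0, s]
  have hc : Fintype.card {x : Fin 11 // x ∉ Set.range s} = 6 := by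
    have := Fintype.card_subtype_compl (fun x : Fin 11 => x ∈ Set.range s)
    rw [this]
    have : Fintype.card {x // x ∈ Set.range s} = 5 := by
      rw [Fintype.card_congr (Equiv.ofInjective s hs).symm, Fintype.card_fin]
    rw [this, Fintype.card_fin]
  let et := (Fintype.equivFinOfCardEq hc).symm
  let t : Fin 6 → Fin 11 := fun k => (et k).1
  have ht : Function.Injective t := Subtype.val_injective.comp et.injective
  have hbij : Function.Bijective (Sum.elim s t) := by
    rw [Fintype.bijective_iff_injective_and_card]
    refine ⟨?_, by simp⟩
    apply hs.sumElim ht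
    intro i k h
    exact (et k).2 ⟨i, h⟩
  have hz : ∀ f, z v f = (∑ i, if f (b i) = 0 then 1 else 0) +
      ∑ k, if f (v (t k)) = 0 then 1 else 0 := by
    intro f
    unfold z
    rw [← Equiv.sum_comp (Equiv.ofBijective _ hbij)]
    simp only [Fintype.sum_sum_type, Equiv.ofBijective_apply, Sum.elim_inl, Sum.elim_inr, hb]
    congr!
  have hne : ∀ (f : Module.Dual F (Fin 5 → F)) x, f x ≠ 0 → f ≠ 0 := by
    rintro f x h rfl; simp at h
  have hcoord : ∀ i j, b.coord i (b j) = if j = i then 1 else 0 := by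
    intro i j
    simp [Module.Basis.coord_apply, Finsupp.single_apply]
  apply no_matrix F hF (fun i k => b.coord i (v (t k)))
  · intro i
    have hn : b.coord i ≠ 0 := hne _ (b i) (by rw [hcoord]; simp)
    have h1 := hodd _ hn
    have h2 := hle _ hn
    rw [hz] at h1 h2
    have : (∑ j, if b.coord i (b j) = 0 then 1 else 0 : ℕ) = 4 := by
      simp only [hcoord]
      clear * -
      simp
      revert i
      decide
    rw [this] at h1 h2
    omega
  · intro i j hij l hl
    let f := b.coord i - l • b.coord j
    have hn : f ≠ 0 := hne _ (b i) (by simp [f, hcoord, hij])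
    have h1 := hodd _ hn
    have h2 := hle _ hn
    rw [hz] at h1 h2
    have : (∑ m, if f (b m) = 0 then 1 else 0 : ℕ) = 3 := by
      have : ∀ m, (if f (b m) = 0 then 1 else 0 : ℕ) = if m = i ∨ m = j then 0 else 1 := by
        intro m
        by_cases hi : m = i
        · subst hi; simp [f, hcoord, hij]
        · by_cases hj : m = j
          · subst hj; simp [f, hcoord, hi, hl]
          · simp [f, hcoord, hi, hj]
      simp only [this]
      clear * - hij
      revert i j
      decide
    rw [this] at h1 h2
    have e : ∀ k, f (v (t k)) = 0 ↔ b.coord i (v (t k)) = l * b.coord j (v (t k)) := by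
      intro k
      simp [f, sub_eq_zero]
    simp only [e] at h1 h2
    omega

end QCap

open Finset
open scoped Classical

/-- There is no quantum cap of size 11 in `PG(4,4)`: no set of 11 points of the projective
space of `GF(4)^5`, no three of which are collinear, meets every hyperplane in a number of
points congruent to 11 mod 2. -/
theorem stmt19 (F : Type*) [Field F] [Fintype F] (hF : Fintype.card F = 4) :
    ¬ ∃ K : Finset (Projectivization F (Fin 5 → F)),
        K.card = 11 ∧
        (∀ p ∈ K, ∀ q ∈ K, ∀ r ∈ K, p ≠ q → p ≠ r → q ≠ r →
          LinearIndependent F ![p.rep, q.rep, r.rep]) ∧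
        (∀ H : Submodule F (Fin 5 → F), Module.finrank F H = 4 →
          (K.filter fun p => p.rep ∈ H).card % 2 = 11 % 2) := by
  rintro ⟨K, hK, hcap, hhyp⟩
  let e : Fin 11 ≃ K := (K.equivFinOfCardEq hK).symm
  have hi : ∀ i j, i ≠ j → ((e i : K) : Projectivization F (Fin 5 → F)) ≠ e j := by
    intro i j h h'
    exact h (e.injective (Subtype.ext h'))
  apply QCap.no_config (fun i => ((e i : K) : Projectivization F (Fin 5 → F)).rep) hF
  · intro i j k h1 h2 h3
    exact hcap _ (e i).2 _ (e j).2 _ (e k).2 (hi _ _ h1) (hi _ _ h2) (hi _ _ h3)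
  · intro f hf
    have h1 : Module.finrank F (LinearMap.ker f) = 4 := by
      have := Module.Dual.finrank_ker_add_one_of_ne_zero hf
      simp at this
      omega
    have := hhyp _ h1
    rw [Finset.card_filter, ← Finset.sum_coe_sort, ← Equiv.sum_comp e] at this
    simpa [QCap.z] using this
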